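/- If the Ellis enveloping semigroup E(Ω,φ) is metrizable, then for every Q ∈ L there exists an ergodic sequence (T_k) of operators from the convex hull of {V^n : n ≥ 0} that converges to Q in the weak* operator topology, i.e. ⟨x, T_k μ⟩ → ⟨x, Qμ⟩ for all x ∈ C(Ω,ℝ) and μ ∈ X*. -/

import Mathlib

open MeasureTheory Filter Topology

/-- The pairing `⟨f, μ⟩ = ∫ f dμ` of a function with a finite signed Borel measure,
defined via the Jordan decomposition of the signed measure. -/
noncomputable def spair {Ω : Type*} [MeasurableSpace Ω] (f : Ω → ℝ) (μ : SignedMeasure Ω) : ℝ :=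
  (∫ ω, f ω ∂μ.toJordanDecomposition.posPart) - (∫ ω, f ω ∂μ.toJordanDecomposition.negPart)

/-- The weak* topology on the space `X*` of finite signed Borel measures, i.e. the topology
of convergence of the pairings with all continuous functions `x ∈ C(Ω, ℝ)`. With this topology
on the codomain, the product topology on `SignedMeasure Ω → SignedMeasure Ω` is precisely the
weak* operator topology (pointwise convergence with `X*` in its weak* topology). -/
noncomputable instance weakStarTopology {Ω : Type*} [TopologicalSpace Ω] [MeasurableSpace Ω] :
    TopologicalSpace (SignedMeasure Ω) :=
  TopologicalSpace.induced (fun μ => fun x : C(Ω, ℝ) => spair (⇑x) μ) inferInstance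

/-- The operator `V : X* → X*`, pushforward by `φ`: `(Vμ)(e) = μ(φ⁻¹ e)`. -/
noncomputable def Vop {Ω : Type*} [MeasurableSpace Ω] (φ : Ω → Ω) :
    SignedMeasure Ω → SignedMeasure Ω :=
  fun μ => μ.map φ

/-- The Dirac measure at `ω`, as a signed measure. -/
noncomputable def diracSM {Ω : Type*} [MeasurableSpace Ω] (ω : Ω) : SignedMeasure Ω :=
  (Measure.dirac ω).toSignedMeasure

/-- `Γ(Ω,φ)`: the closure of `{Vⁿ : n ≥ 0}` in the weak* operator topology. -/
def GammaSG {Ω : Type*} [TopologicalSpace Ω] [MeasurableSpace Ω] (φ : Ω → Ω) :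
    Set (SignedMeasure Ω → SignedMeasure Ω) :=
  closure (Set.range fun n : ℕ => (Vop φ)^[n])

/-- `G(Ω,φ)`: the closure of the convex hull of `{Vⁿ : n ≥ 0}` in the weak* operator topology. -/
def GSG {Ω : Type*} [TopologicalSpace Ω] [MeasurableSpace Ω] (φ : Ω → Ω) :
    Set (SignedMeasure Ω → SignedMeasure Ω) :=
  closure (convexHull ℝ (Set.range fun n : ℕ => (Vop φ)^[n]))

/-- The kernel `L = {Q ∈ G(Ω,φ) : V ∘ Q = Q}` of the semigroup `G(Ω,φ)`. -/
def Lker {Ω : Type*} [TopologicalSpace Ω] [MeasurableSpace Ω] (φ : Ω → Ω) :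
    Set (SignedMeasure Ω → SignedMeasure Ω) :=
  {Q ∈ GSG φ | Vop φ ∘ Q = Q}

/-- The Ellis enveloping semigroup `E(Ω,φ)`: the closure of the iterates `{φⁿ : n ≥ 0}`
in the product topology (pointwise convergence) on `Ω → Ω`. -/
def EllisE {Ω : Type*} [TopologicalSpace Ω] (φ : Ω → Ω) : Set (Ω → Ω) :=
  closure (Set.range fun n : ℕ => φ^[n])

/-- `E_b(Ω,φ)`: the smallest set of self-maps of `Ω` containing the iterates `{φⁿ : n ≥ 0}`
and sequentially closed under pointwise convergence. -/
inductive Eb {Ω : Type*} [TopologicalSpace Ω] (φ : Ω → Ω) : (Ω → Ω) → Prop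
  | iterate (n : ℕ) : Eb φ φ^[n]
  | lim (p : ℕ → Ω → Ω) (q : Ω → Ω) (hp : ∀ k, Eb φ (p k))
      (hq : ∀ ω, Tendsto (fun k => p k ω) atTop (𝓝 (q ω))) : Eb φ q

/-- `E₁(Ω,φ)`: the set of pointwise limits of sequences of iterates `φ^{n_k}`. -/
def E1SG {Ω : Type*} [TopologicalSpace Ω] (φ : Ω → Ω) : Set (Ω → Ω) :=
  {p | ∃ n : ℕ → ℕ, ∀ ω, Tendsto (fun k => φ^[n k] ω) atTop (𝓝 (p ω))}

/-- An operator `P ∈ Γ(Ω,φ)` with `p = πP` is regular if `p` is Borel measurable and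
`(Pμ)(e) = μ(p⁻¹ e)` for every Borel probability measure `μ` and Borel set `e`. -/
def RegularOperator {Ω : Type*} [TopologicalSpace Ω] [MeasurableSpace Ω]
    (P : SignedMeasure Ω → SignedMeasure Ω) (p : Ω → Ω) : Prop :=
  Measurable p ∧ ∀ (μ : Measure Ω) [IsProbabilityMeasure μ],
    ∀ e : Set Ω, MeasurableSet e → P μ.toSignedMeasure e = (μ (p ⁻¹' e)).toReal

/-- A minimal set of the semicascade `(Ω,φ)`: a nonempty closed `φ`-invariant set containing
no proper nonempty closed `φ`-invariant subset. -/
def IsMinimalSet {Ω : Type*} [TopologicalSpace Ω] (φ : Ω → Ω) (m : Set Ω) : Prop :=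
  m.Nonempty ∧ IsClosed m ∧ Set.MapsTo φ m m ∧
    ∀ m' ⊆ m, m'.Nonempty → IsClosed m' → Set.MapsTo φ m' m' → m' = m

/-- The orbit closure of a point `ω`: the closure of the trajectory `{φⁿ ω : n ≥ 0}`. -/
def orbitClosure {Ω : Type*} [TopologicalSpace Ω] (φ : Ω → Ω) (ω : Ω) : Set Ω :=
  closure (Set.range fun n : ℕ => φ^[n] ω)

/-- A `φ`-ergodic measure: a `φ`-invariant Borel probability measure `μ` such that
`μ(e) ∈ {0,1}` for every Borel set `e` with `φ⁻¹ e = e`. -/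
def IsErgodicMeasure {Ω : Type*} [MeasurableSpace Ω] (φ : Ω → Ω) (μ : Measure Ω) : Prop :=
  IsProbabilityMeasure μ ∧ (∀ e : Set Ω, MeasurableSet e → μ (φ ⁻¹' e) = μ e) ∧
    (∀ e : Set Ω, MeasurableSet e → φ ⁻¹' e = e → μ e = 0 ∨ μ e = 1)

/-- The support of a Borel measure: the smallest closed set of full measure
(the intersection of all closed sets of full measure). -/
def msupp {Ω : Type*} [TopologicalSpace Ω] [MeasurableSpace Ω] (μ : Measure Ω) : Set Ω :=
  ⋂₀ {s : Set Ω | IsClosed s ∧ μ sᶜ = 0}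

/-- The semicascade `(Ω,φ)` is tame: for every continuous `x` and every strictly increasing
sequence `n(1) < n(2) < ⋯`, the infimum over finitely supported real coefficients `a` with
`Σ|aₖ| = 1` of the sup-norms `‖Σₖ aₖ · (x ∘ φ^{n(k)})‖` is `0`. -/
def Tame {Ω : Type*} [TopologicalSpace Ω] [CompactSpace Ω] (φ : Ω → Ω)
    (hφ : Continuous φ) : Prop :=
  ∀ (x : C(Ω, ℝ)) (n : ℕ → ℕ), StrictMono n →
    sInf {r : ℝ | ∃ a : ℕ →₀ ℝ, (∑ k ∈ a.support, |a k|) = 1 ∧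
      r = ‖∑ k ∈ a.support, a k • x.comp ⟨φ^[n k], hφ.iterate (n k)⟩‖} = 0

/-- Points `a, b` are proximal: `inf_{n ≥ 0} d(φⁿ a, φⁿ b) = 0`. -/
def Proximal {Ω : Type*} [PseudoMetricSpace Ω] (φ : Ω → Ω) (a b : Ω) : Prop :=
  (⨅ n : ℕ, dist (φ^[n] a) (φ^[n] b)) = 0

variable {Ω : Type*} [TopologicalSpace Ω] [CompactSpace Ω] [TopologicalSpace.MetrizableSpace Ω]
  [Nonempty Ω] [MeasurableSpace Ω] [BorelSpace Ω]

/-!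
The map `p ↦ ⟨x ∘ p, μ⟩` is a continuous function `F (x, μ)` on the compact space
`E(Ω,φ)`: a metrizable Ellis semigroup consists of sequential limits of iterates, so its elements
are Borel and dominated convergence applies. Since `⟨x, Vⁿ μ⟩ = F (x, μ) (φⁿ)`, for `T` in the
convex hull of the `Vⁿ` the coefficient `⟨x, T μ⟩` is a `1`-Lipschitz function of
`F (x, μ) ∈ C(E(Ω,φ))`. As `C(E(Ω,φ))` is separable, these coefficients form an equicontinuous
family on a separable space, and closure points of such a family are sequential limits.
Such a sequence `T k → Q` is ergodic because `T k` commutes with `V`: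
`⟨x, T k (V μ)⟩ = ⟨x ∘ φ, T k μ⟩ → ⟨x ∘ φ, Q μ⟩ = ⟨x, V (Q μ)⟩ = ⟨x, Q μ⟩`.
-/

section EquicontinuousClosure

open TopologicalSpace

theorem exists_seq_tendsto_of_mem_closure_of_equicontinuous {ι α : Type*} [TopologicalSpace ι]
    [SeparableSpace ι] [UniformSpace α] [FirstCountableTopology α] {A : Set (ι → α)}
    (hA : A.Equicontinuous) {f : ι → α} (hf : f ∈ closure A) :
    ∃ u : ℕ → ι → α, (∀ k, u k ∈ A) ∧ Tendsto u atTop (𝓝 f) := by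
  obtain ⟨s, hs_countable, hs_dense⟩ := exists_countable_dense ι
  have := hs_countable.to_subtype
  have hcont : Continuous fun (g : ι → α) (i : s) ↦ g i := by fun_prop
  obtain ⟨v, hvA, hv⟩ := mem_closure_iff_seq_limit.1 (mem_closure_image hcont.continuousAt hf)
  choose u huA hu using hvA
  have hclosed : IsClosed {i | Tendsto (fun k ↦ u k i) atTop (𝓝 (f i))} :=
    Equicontinuous.isClosed_setOfPred_tendsto (hA.comp fun k ↦ ⟨u k, huA k⟩)
      (hA.closure.continuous ⟨f, hf⟩)
  have hs : s ⊆ {i | Tendsto (fun k ↦ u k i) atTop (𝓝 (f i))} := fun i hi ↦ by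
    have hvi := tendsto_pi_nhds.1 hv ⟨i, hi⟩
    simp only [← hu] at hvi
    exact hvi
  exact ⟨u, huA, tendsto_pi_nhds.2 fun i ↦ hclosed.closure_subset_iff.2 hs (hs_dense i)⟩

theorem exists_seq_tendsto_of_mem_closure_of_dist_le {ι M α : Type*} [PseudoMetricSpace M]
    [SeparableSpace M] [PseudoMetricSpace α] (F : ι → M) {A : Set (ι → α)}
    (hA : ∀ g ∈ A, ∀ i j, dist (g i) (g j) ≤ dist (F i) (F j)) {f : ι → α} (hf : f ∈ closure A) :
    ∃ u : ℕ → ι → α, (∀ k, u k ∈ A) ∧ Tendsto u atTop (𝓝 f) := by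
  let : PseudoMetricSpace ι := PseudoMetricSpace.induced F inferInstance
  have := UniformSpace.secondCountable_of_separable M
  have := (Topology.IsInducing.induced F).secondCountableTopology
  refine exists_seq_tendsto_of_mem_closure_of_equicontinuous ?_ hf
  exact Metric.equicontinuous_of_continuity_modulus id tendsto_id _ fun i j g ↦ hA g g.2 i j

end EquicontinuousClosure

theorem commute_of_mem_convexHull_range_iterate {𝕜 E : Type*} [Semiring 𝕜] [PartialOrder 𝕜]
    [AddCommMonoid E] [Module 𝕜 E] (L : E →ₗ[𝕜] E) {T : E → E}
    (hT : T ∈ convexHull 𝕜 (Set.range fun n : ℕ ↦ L^[n])) :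
    Function.Commute T L := by
  refine convexHull_min (t := {T : E → E | Function.Commute T L}) ?_ ?_ hT
  · rintro _ ⟨n, rfl⟩
    exact Function.Commute.iterate_self L n
  · intro T hT S hS a b _ _ _ v
    simp only [Pi.add_apply, Pi.smul_apply, map_add, map_smul, hT v, hS v]

section SignedMeasure

variable {X Y : Type*} [MeasurableSpace X] [MeasurableSpace Y]

instance isFiniteMeasure_variation (μ : SignedMeasure X) : IsFiniteMeasure μ.variation := by
  rw [← SignedMeasure.totalVariation_eq_variation, SignedMeasure.totalVariation]
  infer_instance

theorem spair_eq_integral {f : X → ℝ} {μ : SignedMeasure X} (hf : Integrable f μ.variation) :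
    spair f μ = VectorMeasure.integral μ f (ContinuousLinearMap.lsmul ℝ ℝ).flip := by
  rw [← SignedMeasure.totalVariation_eq_variation] at hf
  obtain ⟨hpos, hneg⟩ := integrable_add_measure.1 hf
  conv_rhs => rw [← SignedMeasure.toSignedMeasure_toJordanDecomposition μ]
  rw [JordanDecomposition.toSignedMeasure, VectorMeasure.integral_sub_vectorMeasure,
    VectorMeasure.integral_toSignedMeasure, VectorMeasure.integral_toSignedMeasure, spair]
  all_goals rwa [VectorMeasure.Integrable, Measure.variation_toSignedMeasure]

theorem spair_add {f : X → ℝ} {μ ν : SignedMeasure X} (hμ : Integrable f μ.variation)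
    (hν : Integrable f ν.variation) : spair f (μ + ν) = spair f μ + spair f ν := by
  rw [spair_eq_integral (VectorMeasure.Integrable.add_vectorMeasure hμ hν), spair_eq_integral hμ,
    spair_eq_integral hν, VectorMeasure.integral_add_vectorMeasure hμ hν]

theorem spair_smul {f : X → ℝ} {μ : SignedMeasure X} (hμ : Integrable f μ.variation) (c : ℝ) :
    spair f (c • μ) = c * spair f μ := by
  rw [spair_eq_integral (VectorMeasure.Integrable.smul_vectorMeasure hμ c), spair_eq_integral hμ,
    VectorMeasure.integral_smul_vectorMeasure, smul_eq_mul]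

theorem spair_map {f : Y → ℝ} {g : X → Y} {μ : SignedMeasure X} (hg : Measurable g)
    (hf : Measurable f) (hfg : Integrable (f ∘ g) μ.variation) :
    spair f (μ.map g) = spair (f ∘ g) μ := by
  have hf_map : Integrable f (μ.map g).variation :=
    ((integrable_map_measure hf.aestronglyMeasurable hg.aemeasurable).2 hfg).mono_measure
      VectorMeasure.variation_map_le
  rw [spair_eq_integral hf_map, spair_eq_integral hfg,
    VectorMeasure.integral_map hg hf.aestronglyMeasurable hfg]
  rfl

theorem Vop_iterate {φ : X → X} (hφ : Measurable φ) (n : ℕ) : (Vop φ)^[n] = Vop φ^[n] := by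
  induction n with
  | zero => exact funext fun μ ↦ (VectorMeasure.map_id μ).symm
  | succ n ih =>
    ext μ s hs
    rw [Function.iterate_succ', Function.comp_apply, ih, Vop, Vop, Vop,
      VectorMeasure.map_apply _ hφ hs, VectorMeasure.map_apply _ (hφ.iterate n) (hφ hs),
      VectorMeasure.map_apply _ (hφ.iterate (n + 1)) hs, Function.iterate_succ', Set.preimage_comp]

theorem commute_Vop_of_mem_convexHull {φ : X → X} {T : SignedMeasure X → SignedMeasure X}
    (hT : T ∈ convexHull ℝ (Set.range fun n : ℕ ↦ (Vop φ)^[n])) : Function.Commute T (Vop φ) :=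
  commute_of_mem_convexHull_range_iterate (VectorMeasure.mapₗ φ : _ →ₗ[ℝ] SignedMeasure X) hT

end SignedMeasure

section Pairing

theorem continuous_spair {X : Type*} [TopologicalSpace X] [MeasurableSpace X] (x : C(X, ℝ)) :
    Continuous fun μ : SignedMeasure X ↦ spair x μ := by
  have hspair : Continuous fun (μ : SignedMeasure X) (y : C(X, ℝ)) ↦ spair y μ :=
    continuous_induced_dom
  exact continuous_pi_iff.1 hspair x

variable {X Y : Type*} [TopologicalSpace X] [CompactSpace X]

theorem integrable_comp_variation [MeasurableSpace Y] (x : C(X, ℝ)) {p : Y → X}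
    (hp : Measurable (x ∘ p)) (μ : SignedMeasure Y) : Integrable (x ∘ p) μ.variation :=
  .of_bound hp.aestronglyMeasurable ‖x‖ (ae_of_all _ fun _ ↦ x.norm_coe_le_norm _)

variable [MeasurableSpace X] [BorelSpace X]

theorem integrable_variation (x : C(X, ℝ)) (μ : SignedMeasure X) : Integrable x μ.variation :=
  integrable_comp_variation x (p := id) x.continuous.measurable μ

/-- The functional `μ ↦ ⟨x, μ⟩` on signed measures, as a linear map. -/
noncomputable def spairLinear (x : C(X, ℝ)) : SignedMeasure X →ₗ[ℝ] ℝ where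
  toFun := spair x
  map_add' μ ν := spair_add (integrable_variation x μ) (integrable_variation x ν)
  map_smul' c μ := spair_smul (integrable_variation x μ) c

theorem spair_Vop_iterate {φ : X → X} (hφ : Continuous φ) (x : C(X, ℝ)) (n : ℕ)
    (μ : SignedMeasure X) : spair x ((Vop φ)^[n] μ) = spair (x ∘ φ^[n]) μ := by
  have hφn := hφ.iterate n
  rw [Vop_iterate hφ.measurable, Vop]
  exact spair_map hφn.measurable x.continuous.measurable
    (integrable_comp_variation x (x.continuous.comp hφn).measurable μ)

theorem tendsto_spair_sub_spair_Vop {φ : X → X} (hφ : Continuous φ)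
    {T : ℕ → SignedMeasure X → SignedMeasure X} {Q : SignedMeasure X → SignedMeasure X}
    (hT : ∀ k, Function.Commute (T k) (Vop φ)) (hQ : Vop φ ∘ Q = Q)
    (hTQ : ∀ (x : C(X, ℝ)) μ, Tendsto (fun k ↦ spair x (T k μ)) atTop (𝓝 (spair x (Q μ))))
    (x : C(X, ℝ)) (μ : SignedMeasure X) :
    Tendsto (fun k ↦ spair x (T k μ) - spair x (T k (Vop φ μ))) atTop (𝓝 0) := by
  have spair_Vop (ν) : spair x (Vop φ ν) = spair (x.comp ⟨φ, hφ⟩) ν := spair_Vop_iterate hφ x 1 ν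
  have hlim : spair (x.comp ⟨φ, hφ⟩) (Q μ) = spair x (Q μ) := by
    rw [← spair_Vop, ← Function.comp_apply (f := Vop φ), hQ]
  simpa only [(hT _).eq μ, spair_Vop, hlim, sub_self]
    using (hTQ x μ).sub (hTQ (x.comp ⟨φ, hφ⟩) μ)

end Pairing

section Ellis

variable {X : Type*} [TopologicalSpace X] {φ : X → X}

instance EllisE.compactSpace [CompactSpace X] : CompactSpace (EllisE φ) :=
  isCompact_iff_compactSpace.1 isClosed_closure.isCompact

/-- The iterate `φⁿ` as a point of the Ellis semigroup `E(X,φ)`. -/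
def EllisE.iterate (φ : X → X) (n : ℕ) : EllisE φ :=
  ⟨φ^[n], subset_closure ⟨n, rfl⟩⟩

theorem EllisE.denseRange_iterate : DenseRange (EllisE.iterate φ) := by
  refine Subtype.dense_iff.2 fun p hp ↦ ?_
  rwa [← Set.range_comp]

variable [MeasurableSpace X] [BorelSpace X]

theorem EllisE.measurable_comp [FrechetUrysohnSpace (EllisE φ)] (hφ : Continuous φ)
    (x : C(X, ℝ)) (p : EllisE φ) : Measurable (x ∘ p.1) := by
  obtain ⟨q, hq, hqp⟩ := mem_closure_iff_seq_limit.1 (EllisE.denseRange_iterate p)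
  choose n hn using hq
  refine measurable_of_tendsto_metrizable (f := fun k ↦ x ∘ φ^[n k])
    (fun k ↦ (x.continuous.comp (hφ.iterate _)).measurable) (tendsto_pi_nhds.2 fun ω ↦ ?_)
  have hω : Tendsto (fun k ↦ (q k).1 ω) atTop (𝓝 (p.1 ω)) :=
    ((continuous_apply ω).comp continuous_subtype_val).continuousAt.tendsto.comp hqp
  simp only [← hn] at hω
  exact (x.continuous.tendsto _).comp hω

variable [CompactSpace X]

/-- The continuous function `p ↦ ⟨x ∘ p, μ⟩` on the Ellis semigroup `E(X,φ)`, for `z = (x, μ)`.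
Its value at `φⁿ` is `⟨x, Vⁿ μ⟩`. -/
noncomputable def ellisCoeff [FirstCountableTopology (EllisE φ)] (hφ : Continuous φ)
    (z : C(X, ℝ) × SignedMeasure X) : C(EllisE φ, ℝ) where
  toFun p := spair (z.1 ∘ p.1) z.2
  continuous_toFun := by
    have hmeas := EllisE.measurable_comp hφ z.1
    simp only [spair_eq_integral (integrable_comp_variation z.1 (hmeas _) z.2)]
    exact VectorMeasure.continuous_of_dominated (bound := fun _ ↦ ‖z.1‖)
      (fun p ↦ (hmeas p).aestronglyMeasurable)
      (fun p ↦ ae_of_all _ fun _ ↦ z.1.norm_coe_le_norm _) (integrable_const _)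
      (ae_of_all _ fun ω ↦ z.1.continuous.comp
        ((continuous_apply ω).comp continuous_subtype_val))

theorem dist_spair_le_dist_ellisCoeff [FirstCountableTopology (EllisE φ)] (hφ : Continuous φ)
    {T : SignedMeasure X → SignedMeasure X}
    (hT : T ∈ convexHull ℝ (Set.range fun n : ℕ ↦ (Vop φ)^[n]))
    (z w : C(X, ℝ) × SignedMeasure X) :
    dist (spair z.1 (T z.2)) (spair w.1 (T w.2)) ≤ dist (ellisCoeff hφ z) (ellisCoeff hφ w) := by
  let D : (SignedMeasure X → SignedMeasure X) →ₗ[ℝ] ℝ :=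
    spairLinear z.1 ∘ₗ LinearMap.proj z.2 - spairLinear w.1 ∘ₗ LinearMap.proj w.2
  have hD (S) : ‖D S‖ = dist (spair z.1 (S z.2)) (spair w.1 (S w.2)) := rfl
  suffices T ∈ D ⁻¹' Metric.closedBall 0 (dist (ellisCoeff hφ z) (ellisCoeff hφ w)) by
    rwa [Set.mem_preimage, mem_closedBall_zero_iff, hD] at this
  refine convexHull_min ?_ ((convex_closedBall _ _).linear_preimage D) hT
  rintro _ ⟨n, rfl⟩
  rw [Set.mem_preimage, mem_closedBall_zero_iff, hD, spair_Vop_iterate hφ, spair_Vop_iterate hφ]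
  exact ContinuousMap.dist_apply_le_dist (f := ellisCoeff hφ z) (g := ellisCoeff hφ w)
    (EllisE.iterate φ n)

theorem exists_seq_tendsto_of_mem_GSG [FirstCountableTopology (EllisE φ)]
    [TopologicalSpace.SeparableSpace C(EllisE φ, ℝ)] (hφ : Continuous φ)
    {Q : SignedMeasure X → SignedMeasure X} (hQ : Q ∈ GSG φ) :
    ∃ T : ℕ → SignedMeasure X → SignedMeasure X,
      (∀ k, T k ∈ convexHull ℝ (Set.range fun n : ℕ ↦ (Vop φ)^[n])) ∧
      ∀ (x : C(X, ℝ)) μ, Tendsto (fun k ↦ spair x (T k μ)) atTop (𝓝 (spair x (Q μ))) := by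
  let coeff (T : SignedMeasure X → SignedMeasure X) (z : C(X, ℝ) × SignedMeasure X) : ℝ :=
    spair z.1 (T z.2)
  have hcoeff : Continuous coeff :=
    continuous_pi fun z ↦ (continuous_spair z.1).comp (continuous_apply z.2)
  obtain ⟨u, hu, huQ⟩ := exists_seq_tendsto_of_mem_closure_of_dist_le (ellisCoeff hφ)
    (by rintro _ ⟨T, hT, rfl⟩; exact dist_spair_le_dist_ellisCoeff hφ hT)
    (mem_closure_image hcoeff.continuousAt hQ)
  choose T hT hTu using hu
  refine ⟨T, hT, fun x μ ↦ ?_⟩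
  simpa only [← hTu] using tendsto_pi_nhds.1 huQ (x, μ)

theorem stmt_12_general [TopologicalSpace.PseudoMetrizableSpace (EllisE φ)] (hφ : Continuous φ)
    {Q : SignedMeasure X → SignedMeasure X} (hQ : Q ∈ Lker φ) :
    ∃ T : ℕ → SignedMeasure X → SignedMeasure X,
      (∀ k, T k ∈ convexHull ℝ (Set.range fun n : ℕ ↦ (Vop φ)^[n])) ∧
      (∀ (x : C(X, ℝ)) (μ : SignedMeasure X),
        Tendsto (fun k ↦ spair x (T k μ) - spair x (T k (Vop φ μ))) atTop (𝓝 0)) ∧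
      (∀ (x : C(X, ℝ)) (μ : SignedMeasure X),
        Tendsto (fun k ↦ spair x (T k μ)) atTop (𝓝 (spair x (Q μ)))) := by
  let := TopologicalSpace.pseudoMetrizableSpacePseudoMetric (EllisE φ)
  obtain ⟨T, hT, hTQ⟩ := exists_seq_tendsto_of_mem_GSG hφ hQ.1
  have hcomm (k : ℕ) : Function.Commute (T k) (Vop φ) := commute_Vop_of_mem_convexHull (hT k)
  exact ⟨T, hT, tendsto_spair_sub_spair_Vop hφ hcomm hQ.2 hTQ, hTQ⟩

end Ellis

/-- If `E(Ω,φ)` is metrizable (the semicascade is ordinary), then every `Q ∈ L` is the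
weak* operator limit of an ergodic sequence of operators from the convex hull of
`{Vⁿ : n ≥ 0}`. -/
theorem stmt_12 (φ : Ω → Ω) (hφ : Continuous φ)
    (hmet : TopologicalSpace.MetrizableSpace (EllisE φ)) :
    ∀ Q ∈ Lker φ, ∃ T : ℕ → SignedMeasure Ω → SignedMeasure Ω,
      (∀ k, T k ∈ convexHull ℝ (Set.range fun n : ℕ => (Vop φ)^[n])) ∧
      (∀ (x : C(Ω, ℝ)) (μ : SignedMeasure Ω),
        Tendsto (fun k => spair (⇑x) (T k μ) - spair (⇑x) (T k (Vop φ μ))) atTop (𝓝 0)) ∧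
      (∀ (x : C(Ω, ℝ)) (μ : SignedMeasure Ω),
        Tendsto (fun k => spair (⇑x) (T k μ)) atTop (𝓝 (spair (⇑x) (Q μ)))) := by
  have := hmet
  exact fun _ hQ ↦ stmt_12_general hφ hQ
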